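/- arXiv:1810.10577 — 2 statements merged into one kernel-verified Lean document; each statement's English description precedes it below -/
import Mathlib

section
/- Let n ≥ 3 and let G be the n×n toroidal chess graph. In the game of Cops and Robbers on G with a single cop that is a knight and a robber on foot, the robber has a winning strategy; equivalently, with knight cops and a foot robber, c(G) ≥ 2. (Indeed, for every vertex v and every vertex c, at least one of the five vertices v, v±(1,0), v±(0,1) is not a knight-move target of c.) -/
/-!
A knight's displacement `(x, y)` satisfies `x² + y² = 5`. If `(x, y)`, `(x + 1, y)` and
`(x - 1, y)` all satisfied this equation, then `2 = (x + 1)² + (x - 1)² - 2x²` would vanish mod `n`,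
which is impossible for `n ≥ 3`. So a knight never protects all of a vertex and its two horizontal
neighbours (`exists_unprotected`).

The robber keeps the invariant that on the cop's turn he is neither on the cop's vertex nor on a
protected one. Such a starting vertex exists since a foot-neighbour of the cop is never protected
(`not_knightMove_of_footMove`). After the cop's turn the robber is still uncaught; he either moves
to an unprotected vertex, or, if that vertex is the cop's own, he is foot-adjacent to the cop and
stays where he is (`exists_escape`). Hence no uncaught position of this kind is winning for the cop
(`not_copsWin_one`).

For the cop number, the infimum is over a nonempty set (one cop on every vertex wins at once)
that contains neither `0` nor `1`.
-/

/-- Vertices of the `n × n` toroidal chess graph: pairs of coordinates mod `n`. -/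
abbrev V (n : ℕ) : Type := ZMod n × ZMod n

/-- "On foot" moves (toroidal grid adjacency): the target differs from the current
vertex by `(±1,0)` or `(0,±1)` mod `n`. -/
def footMove (n : ℕ) (v w : V n) : Prop :=
  w - v = (1, 0) ∨ w - v = (-1, 0) ∨ w - v = (0, 1) ∨ w - v = (0, -1)

/-- Knight moves: the target differs from the current vertex by `(±1,±2)` or
`(±2,±1)` mod `n`. -/
def knightMove (n : ℕ) (v w : V n) : Prop :=
  w - v = (1, 2) ∨ w - v = (1, -2) ∨ w - v = (-1, 2) ∨ w - v = (-1, -2) ∨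
    w - v = (2, 1) ∨ w - v = (2, -1) ∨ w - v = (-2, 1) ∨ w - v = (-2, -1)

/-- One turn of a piece with allowable-move relation `R`: either stay on the current
vertex or move to an allowable vertex. -/
def stayOr {α : Type*} (R : α → α → Prop) (v w : α) : Prop := w = v ∨ R v w

/-- `CopsWin copMove robMove c r t` holds when, from the position in which the `k`
cops occupy the vertices `c : Fin k → V n` (cop `i` moving by the relation
`copMove i`), the robber (moving by `robMove`) occupies `r`, and it is the cops'
turn iff `t = true`, the cops can force that after finitely many turns some cop
occupies the robber's vertex.  On the cops' turn every cop simultaneously either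
stays or makes an allowable move; likewise for the robber on his turn. -/
inductive CopsWin {n k : ℕ} (copMove : Fin k → V n → V n → Prop)
    (robMove : V n → V n → Prop) : (Fin k → V n) → V n → Bool → Prop
  | caught {c : Fin k → V n} {r : V n} {t : Bool} (h : ∃ i, c i = r) :
      CopsWin copMove robMove c r t
  | copsTurn {c : Fin k → V n} {r : V n} (c' : Fin k → V n)
      (h : ∀ i, stayOr (copMove i) (c i) (c' i))
      (hw : CopsWin copMove robMove c' r false) : CopsWin copMove robMove c r true
  | robTurn {c : Fin k → V n} {r : V n}
      (hw : ∀ r', stayOr robMove r r' → CopsWin copMove robMove c r' true) :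
      CopsWin copMove robMove c r false

/-- The `k` cops have a winning strategy: they can choose starting vertices
(repetitions allowed) so that, whatever starting vertex the robber then chooses,
the cops (moving first) can force a capture in finitely many turns. -/
def CopsHaveWinningStrategy {n : ℕ} (k : ℕ) (copMove : Fin k → V n → V n → Prop)
    (robMove : V n → V n → Prop) : Prop :=
  ∃ c : Fin k → V n, ∀ r : V n, CopsWin copMove robMove c r true

/-- The cop number of the `n × n` toroidal chess graph, for the game in which,
when there are `k` cops, cop `i` moves by the relation `copMove k i` and the
robber moves by `robMove`: the minimum number of cops having a winning strategy. -/
noncomputable def copNumber (n : ℕ) (copMove : ∀ k, Fin k → V n → V n → Prop)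
    (robMove : V n → V n → Prop) : ℕ :=
  sInf {k | CopsHaveWinningStrategy k (copMove k) robMove}

theorem two_ne_zero_zmod {n : ℕ} (hn : 3 ≤ n) : (2 : ZMod n) ≠ 0 := by
  intro h
  have h2 : ((2 : ℕ) : ZMod n) = 0 := by exact_mod_cast h
  have := Nat.le_of_dvd (by norm_num) ((ZMod.natCast_eq_zero_iff 2 n).1 h2)
  omega

theorem one_ne_zero_zmod {n : ℕ} (hn : 3 ≤ n) : (1 : ZMod n) ≠ 0 := by
  intro h
  apply two_ne_zero_zmod hn
  linear_combination 2 * h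

theorem knightMove.sq_add_sq {n : ℕ} {c w : V n} (h : knightMove n c w) :
    (w.1 - c.1) ^ 2 + (w.2 - c.2) ^ 2 = 5 := by
  simp only [knightMove, Prod.ext_iff, Prod.fst_sub, Prod.snd_sub] at h
  rcases h with h | h | h | h | h | h | h | h <;> rw [h.1, h.2] <;> norm_num

/-- A knight leaves unprotected a vertex or one of its two horizontal neighbours. -/
theorem exists_unprotected {n : ℕ} (hn : 3 ≤ n) (v c : V n) :
    ∃ w : V n, (w = v ∨ w = v + (1, 0) ∨ w = v - (1, 0)) ∧ ¬ knightMove n c w := by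
  by_contra! H
  have h0 := (H v (by simp)).sq_add_sq
  have h1 := (H (v + (1, 0)) (by simp)).sq_add_sq
  have h2 := (H (v - (1, 0)) (by simp)).sq_add_sq
  simp only [Prod.fst_add, Prod.snd_add, Prod.fst_sub, Prod.snd_sub] at h1 h2
  apply two_ne_zero_zmod hn
  linear_combination h1 + h2 - 2 * h0

theorem not_knightMove_of_footMove {n : ℕ} (hn : 3 ≤ n) {c r : V n} (h : footMove n c r) :
    ¬ knightMove n c r := by
  have h1 := one_ne_zero_zmod hn
  have h2 := two_ne_zero_zmod hn
  intro hk
  -- Every knight displacement has both coordinates nonzero; every foot displacement has a zero.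
  have hne : (r - c).1 ≠ 0 ∧ (r - c).2 ≠ 0 := by
    rcases hk with h | h | h | h | h | h | h | h <;> rw [h] <;> simp [h1, h2]
  rcases h with h | h | h | h <;> rw [h] at hne <;> simp at hne

/-- An uncaught robber has a turn after which he is neither caught nor protected by the cop. -/
theorem exists_escape {n : ℕ} (hn : 3 ≤ n) {c r : V n} (hcr : c ≠ r) :
    ∃ r', stayOr (footMove n) r r' ∧ c ≠ r' ∧ ¬ knightMove n c r' := by
  obtain ⟨w, hw, hk⟩ := exists_unprotected hn r c
  by_cases hcw : c = w
  · subst hcw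
    refine ⟨r, Or.inl rfl, hcr, not_knightMove_of_footMove hn ?_⟩
    rcases hw with h | h | h
    · exact absurd h hcr
    · right; left; rw [h]; ext <;> simp
    · left; rw [h]; ext <;> simp
  · refine ⟨w, ?_, hcw, hk⟩
    rcases hw with h | h | h
    · exact Or.inl h
    · right; left; rw [h]; ext <;> simp
    · right; right; left; rw [h]; ext <;> simp

/-- The robber's invariant: an uncaught robber, who moreover is unprotected by the cop if it is the
cop's turn, is never caught. -/
theorem not_copsWin_one {n : ℕ} (hn : 3 ≤ n) {c : Fin 1 → V n} {r : V n} {t : Bool}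
    (h : CopsWin (fun _ : Fin 1 => knightMove n) (footMove n) c r t) :
    ¬ (c 0 ≠ r ∧ (t = true → ¬ knightMove n (c 0) r)) := by
  induction h with
  | caught h =>
    obtain ⟨i, hi⟩ := h
    rw [Subsingleton.elim i 0] at hi
    exact fun H => H.1 hi
  | @copsTurn c r c' h _ ih =>
    rintro ⟨hcr, hk⟩
    refine ih ⟨?_, by simp⟩
    rintro rfl
    rcases h 0 with h0 | h0
    · exact hcr h0.symm
    · exact hk rfl h0
  | robTurn _ ih =>
    rintro ⟨hcr, -⟩
    obtain ⟨r', hr', hne, hk⟩ := exists_escape hn hcr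
    exact ih r' hr' ⟨hne, fun _ => hk⟩

theorem one_knight_no_strategy {n : ℕ} (hn : 3 ≤ n) :
    ¬ CopsHaveWinningStrategy 1 (fun _ : Fin 1 => knightMove n) (footMove n) := by
  rintro ⟨c, hc⟩
  have hf : footMove n (c 0) (c 0 + (1, 0)) := by left; simp
  refine not_copsWin_one hn (hc (c 0 + (1, 0))) ⟨?_, fun _ => not_knightMove_of_footMove hn hf⟩
  simp [Prod.ext_iff, one_ne_zero_zmod hn]

theorem not_copsWin_zero {n : ℕ} {copMove : Fin 0 → V n → V n → Prop}
    {robMove : V n → V n → Prop} {c : Fin 0 → V n} {r : V n} {t : Bool}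
    (h : CopsWin copMove robMove c r t) : False := by
  induction h with
  | caught h => exact h.choose.elim0
  | copsTurn _ _ _ ih => exact ih
  | @robTurn _ r _ ih => exact ih r (Or.inl rfl)

/-- Some number of cops wins: as many as there are vertices. -/
theorem exists_winning {n : ℕ} (hn : 3 ≤ n) (copMove : ∀ k, Fin k → V n → V n → Prop)
    (robMove : V n → V n → Prop) :
    ∃ k, CopsHaveWinningStrategy k (copMove k) robMove := by
  have : NeZero n := ⟨by omega⟩
  exact ⟨Fintype.card (V n), (Fintype.equivFin (V n)).symm,
    fun r => .caught ⟨Fintype.equivFin (V n) r, by simp⟩⟩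

/-- For `n ≥ 3`, on the `n × n` toroidal chess graph with a single
knight cop and a robber on foot, the robber has a winning strategy (the single cop
does not); equivalently, with knight cops and a foot robber, `c(G) ≥ 2`.  Indeed,
for every vertex `v` and every vertex `c`, at least one of the five vertices
`v`, `v ± (1,0)`, `v ± (0,1)` is not a knight-move target of `c`. -/
theorem one_knight_cop_loses_to_foot_robber (n : ℕ) (hn : 3 ≤ n) :
    (∀ v c : V n, ∃ w : V n,
        (w = v ∨ w = v + (1, 0) ∨ w = v - (1, 0) ∨ w = v + (0, 1) ∨ w = v - (0, 1)) ∧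
        ¬ knightMove n c w) ∧
    ¬ CopsHaveWinningStrategy 1 (fun _ : Fin 1 => knightMove n) (footMove n) ∧
    2 ≤ copNumber n (fun _ _ => knightMove n) (footMove n) := by
  refine ⟨fun v c => ?_, one_knight_no_strategy hn, ?_⟩
  · obtain ⟨w, hw, hk⟩ := exists_unprotected hn v c
    exact ⟨w, by tauto, hk⟩
  · have key : ∀ k, CopsHaveWinningStrategy k (fun _ : Fin k => knightMove n) (footMove n) →
        2 ≤ k
      | 0, ⟨_, hc⟩ => (not_copsWin_zero (hc 0)).elim
      | 1, h => (one_knight_no_strategy hn h).elim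
      | k + 2, _ => by omega
    exact key _ (Nat.sInf_mem (exists_winning hn (fun _ _ => knightMove n) (footMove n)))
end

section
/- Let n ≥ 5 and let G be the n×n toroidal chess graph. In the game of Cops and Robbers on G in which every cop is a knight and the robber is on foot, the cop number of G is exactly 3: three knight cops have a winning strategy, and two knight cops do not. -/
/-- Displacements available to a knight on its turn: stay, or one of the eight knight moves. -/
def knightSteps : Finset (ℤ × ℤ) :=
  {(0, 0), (1, 2), (1, -2), (-1, 2), (-1, -2), (2, 1), (2, -1), (-2, 1), (-2, -1)}

/-- Displacements available to a player on foot on his turn: stay, or one of the four unit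
steps. -/
def footSteps : Finset (ℤ × ℤ) :=
  {(0, 0), (1, 0), (-1, 0), (0, 1), (0, -1)}

/-- The covering projection from the plane lattice to the torus. -/
def proj (n : ℕ) : ℤ × ℤ →+ V n :=
  (Int.castAddHom (ZMod n)).prodMap (Int.castAddHom (ZMod n))

lemma proj_apply (n : ℕ) (d : ℤ × ℤ) : proj n d = ((d.1 : ZMod n), (d.2 : ZMod n)) := rfl

lemma stayOr_knightMove_iff {n : ℕ} {v w : V n} :
    stayOr (knightMove n) v w ↔ ∃ m ∈ knightSteps, w = v + proj n m := by
  simp [stayOr, knightMove, knightSteps, proj_apply, sub_eq_iff_eq_add', Prod.mk_zero_zero]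

lemma stayOr_footMove_iff {n : ℕ} {v w : V n} :
    stayOr (footMove n) v w ↔ ∃ e ∈ footSteps, w = v + proj n e := by
  simp [stayOr, footMove, footSteps, proj_apply, sub_eq_iff_eq_add', Prod.mk_zero_zero]

/-! ### Three knights win -/

/-- Three knights standing at displacements `a`, `b`, `c` from the robber, who is to move,
force a capture, wherever the robber stands. -/
def Wins₃ (n : ℕ) (a b c : ℤ × ℤ) : Prop :=
  ∀ r : V n, CopsWin (fun _ : Fin 3 => knightMove n) (footMove n)
    ![r + proj n a, r + proj n b, r + proj n c] r false

/-- The first two knights, at displacements `a` and `b`, lead to a capture irrespective of the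
position of the third. -/
def Wins₂ (n : ℕ) (a b : ℤ × ℤ) : Prop := ∀ c, Wins₃ n a b c

/-- Whatever step `e` the robber takes, the knights at displacements `a` and `b` either can
capture him at once or can move to displacements satisfying `T`. -/
def Forces (T : ℤ × ℤ → ℤ × ℤ → Prop) (a b : ℤ × ℤ) : Prop :=
  ∀ e ∈ footSteps, e - a ∈ knightSteps ∨ e - b ∈ knightSteps ∨
    ∃ m ∈ knightSteps, ∃ m' ∈ knightSteps, T (a - e + m) (b - e + m')

instance (T : ℤ × ℤ → ℤ × ℤ → Prop) [∀ a b, Decidable (T a b)] (a b : ℤ × ℤ) :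
    Decidable (Forces T a b) := by unfold Forces; infer_instance

lemma Forces.mono {T T' : ℤ × ℤ → ℤ × ℤ → Prop} {a b : ℤ × ℤ} (h : Forces T a b)
    (hT : ∀ a b, T a b → T' a b) : Forces T' a b := by
  intro e he
  rcases h e he with h | h | ⟨m, hm, m', hm', h⟩
  · exact .inl h
  · exact .inr (.inl h)
  · exact .inr (.inr ⟨m, hm, m', hm', hT _ _ h⟩)

lemma zero_mem_knightSteps : (0 : ℤ × ℤ) ∈ knightSteps := by decide

lemma wins₃_step {n : ℕ} {a b c : ℤ × ℤ}
    (h : ∀ e ∈ footSteps, e - a ∈ knightSteps ∨ e - b ∈ knightSteps ∨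
      ∃ m ∈ knightSteps, ∃ m' ∈ knightSteps, ∃ m'' ∈ knightSteps,
        Wins₃ n (a - e + m) (b - e + m') (c - e + m'')) : Wins₃ n a b c := by
  intro r
  refine .robTurn fun r' hr' => ?_
  obtain ⟨e, he, rfl⟩ := stayOr_footMove_iff.1 hr'
  have key : ∀ m ∈ knightSteps, ∀ m' ∈ knightSteps, ∀ m'' ∈ knightSteps,
      CopsWin (fun _ : Fin 3 => knightMove n) (footMove n)
        ![r + proj n e + proj n (a - e + m), r + proj n e + proj n (b - e + m'),
          r + proj n e + proj n (c - e + m'')] (r + proj n e) false →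
      CopsWin (fun _ : Fin 3 => knightMove n) (footMove n)
        ![r + proj n a, r + proj n b, r + proj n c] (r + proj n e) true := by
    intro m hm m' hm' m'' hm'' hw
    refine .copsTurn _ (fun i => stayOr_knightMove_iff.2 ?_) hw
    fin_cases i
    · exact ⟨m, hm, by simp only [map_add, map_sub]; simp; abel⟩
    · exact ⟨m', hm', by simp only [map_add, map_sub]; simp; abel⟩
    · exact ⟨m'', hm'', by simp only [map_add, map_sub]; simp; abel⟩
  rcases h e he with h | h | ⟨m, hm, m', hm', m'', hm'', h⟩
  · exact key _ h 0 zero_mem_knightSteps 0 zero_mem_knightSteps (.caught ⟨0, by simp⟩)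
  · exact key 0 zero_mem_knightSteps _ h 0 zero_mem_knightSteps (.caught ⟨1, by simp⟩)
  · exact key m hm m' hm' m'' hm'' (h _)

lemma wins₂_step {n : ℕ} {a b : ℤ × ℤ} (h : Forces (Wins₂ n) a b) : Wins₂ n a b := by
  intro c
  refine wins₃_step fun e he => ?_
  rcases h e he with h | h | ⟨m, hm, m', hm', h⟩
  · exact .inl h
  · exact .inr (.inl h)
  · exact .inr (.inr ⟨m, hm, m', hm', 0, zero_mem_knightSteps, h _⟩)

/-- Two knights pin the robber: any step other than staying put is answered by a capture. -/
def Pinned (a b : ℤ × ℤ) : Prop :=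
  ∀ e ∈ footSteps, e ≠ 0 → e - a ∈ knightSteps ∨ e - b ∈ knightSteps

instance (a b : ℤ × ℤ) : Decidable (Pinned a b) := by unfold Pinned; infer_instance

/-- Against a pinned robber the third knight walks to him freely, since knight moves generate
`ℤ × ℤ`: each unit vector is a sum of three of them. -/
lemma Pinned.wins₂ {n : ℕ} {a b : ℤ × ℤ} (h : Pinned a b) : Wins₂ n a b := by
  have walk : ∀ m ∈ knightSteps, ∀ c, Wins₃ n a b (c + m) → Wins₃ n a b c := by
    intro m hm c hc
    refine wins₃_step fun e he => ?_
    by_cases h0 : e = 0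
    · subst h0
      exact .inr (.inr ⟨0, zero_mem_knightSteps, 0, zero_mem_knightSteps, m, hm, by simpa using hc⟩)
    · exact (h e he h0).imp_right .inl
  have walk3 : ∀ m ∈ knightSteps, ∀ m' ∈ knightSteps, ∀ m'' ∈ knightSteps,
      ∀ c, Wins₃ n a b (c + (m + m' + m'')) → Wins₃ n a b c := by
    intro m hm m' hm' m'' hm'' c hc
    refine walk m hm _ (walk m' hm' _ (walk m'' hm'' _ ?_))
    simpa [add_assoc] using hc
  have right := walk3 (1, 2) (by decide) (2, -1) (by decide) (-2, -1) (by decide)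
  have left := walk3 (-1, -2) (by decide) (-2, 1) (by decide) (2, 1) (by decide)
  have up := walk3 (2, 1) (by decide) (-1, 2) (by decide) (-1, -2) (by decide)
  have down := walk3 (-2, -1) (by decide) (1, -2) (by decide) (1, 2) (by decide)
  have caught : Wins₃ n a b (0, 0) := fun r => .caught ⟨2, by simp [proj_apply]⟩
  have vertical : ∀ y : ℤ, Wins₃ n a b (0, y) := by
    intro y
    induction y using Int.induction_on with
    | zero => exact caught
    | succ i ih => exact down _ (by simpa using ih)
    | pred i ih => exact up _ (by simpa using ih)
  rintro ⟨x, y⟩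
  induction x using Int.induction_on with
  | zero => exact vertical y
  | succ i ih => exact left _ (by simpa using ih)
  | pred i ih => exact right _ (by simpa using ih)

/-- The displacements with squared length `2` or `4`. From each of them a knight attacks two of
the robber's four neighbours, and a single knight can maintain such a displacement forever. -/
def closeSet : Finset (ℤ × ℤ) :=
  {(1, 1), (1, -1), (-1, 1), (-1, -1), (2, 0), (-2, 0), (0, 2), (0, -2)}

/-- The Euclidean inner product on `ℤ × ℤ`. -/
def dot (a b : ℤ × ℤ) : ℤ := a.1 * b.1 + a.2 * b.2

/-- One knight diagonally adjacent to the robber and one orthogonally adjacent, on the same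
side: up to symmetry, `(1, 1)` and `(1, 0)`, in either order. (A displacement of squared length
`4` has even inner product with every unit vector, so `dot a b = 1` excludes it.) -/
def Corner (a b : ℤ × ℤ) : Prop :=
  (a ∈ closeSet ∧ b ∈ footSteps ∨ b ∈ closeSet ∧ a ∈ footSteps) ∧ dot a b = 1

/-- One knight attacking the robber and one orthogonally adjacent to him on the far side: up to
symmetry, `(2, 1)` and `(-1, 0)`. -/
def Opposed (a b : ℤ × ℤ) : Prop := a ∈ knightSteps ∧ b ∈ footSteps ∧ dot a b = -2

/-- Two knights at close displacements that are neither equal nor opposite. -/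
def Spread (a b : ℤ × ℤ) : Prop := a ∈ closeSet ∧ b ∈ closeSet ∧ a ≠ b ∧ a ≠ -b

instance (a b : ℤ × ℤ) : Decidable (Corner a b) := by unfold Corner; infer_instance
instance (a b : ℤ × ℤ) : Decidable (Opposed a b) := by unfold Opposed; infer_instance
instance (a b : ℤ × ℤ) : Decidable (Spread a b) := by unfold Spread; infer_instance

lemma Corner.wins₂ {n : ℕ} {a b : ℤ × ℤ} (h : Corner a b) : Wins₂ n a b := by
  have key : ∀ a ∈ closeSet, ∀ b ∈ footSteps, (dot a b = 1 → Forces Pinned a b) ∧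
      (dot b a = 1 → Forces Pinned b a) := by
    decide +kernel
  have hf : Forces Pinned a b := by
    obtain ⟨⟨ha, hb⟩ | ⟨hb, ha⟩, hd⟩ := h
    exacts [(key a ha b hb).1 hd, (key b hb a ha).2 hd]
  exact wins₂_step (hf.mono fun _ _ h => h.wins₂)

lemma wins₂_of_pinned_or_corner {n : ℕ} (a b : ℤ × ℤ) (h : Pinned a b ∨ Corner a b) :
    Wins₂ n a b :=
  h.elim Pinned.wins₂ Corner.wins₂

lemma Opposed.wins₂ {n : ℕ} {a b : ℤ × ℤ} (h : Opposed a b) : Wins₂ n a b := by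
  have key : ∀ a ∈ knightSteps, ∀ b ∈ footSteps, dot a b = -2 →
      Forces (fun a b => Pinned a b ∨ Corner a b) a b := by
    decide +kernel
  exact wins₂_step ((key a h.1 b h.2.1 h.2.2).mono wins₂_of_pinned_or_corner)

lemma Spread.wins₂ {n : ℕ} {a b : ℤ × ℤ} (h : Spread a b) : Wins₂ n a b := by
  have key : ∀ a ∈ closeSet, ∀ b ∈ closeSet, a ≠ b → a ≠ -b →
      Forces (fun a b => Pinned a b ∨ Corner a b) a b := by
    decide +kernel
  exact wins₂_step ((key a h.1 b h.2.1 h.2.2.1 h.2.2.2).mono wins₂_of_pinned_or_corner)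

lemma wins₂_of_mem_closeSet {n : ℕ} {a b : ℤ × ℤ} (ha : a ∈ closeSet) (hb : b ∈ closeSet) :
    Wins₂ n a b := by
  have key : ∀ a ∈ closeSet, ∀ b ∈ closeSet, Spread a b ∨
      Forces (fun a b => Pinned a b ∨ Opposed a b ∨ Spread a b) a b := by
    decide +kernel
  rcases key a ha b hb with h | h
  · exact h.wins₂
  · refine wins₂_step (h.mono fun _ _ h => ?_)
    rcases h with h | h | h
    exacts [h.wins₂, h.wins₂, h.wins₂]

/-- Distance still to be made up by a knight at displacement `a`: zero once it is close, and the
squared Euclidean length before that. -/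
def gap (a : ℤ × ℤ) : ℕ := if a ∈ closeSet then 0 else (dot a a).toNat

lemma mem_closeSet_keep : ∀ a ∈ closeSet, ∀ e ∈ footSteps,
    e - a ∈ knightSteps ∨ ∃ m ∈ knightSteps, a - e + m ∈ closeSet := by
  decide +kernel

/-- Seen from `p`, of `ℓ¹`-length at least `3`, the knight move best aligned with `-p` brings the
knight nearer than it was before the robber's step `e`. With `s` and `t` the larger and smaller
absolute coordinate of `p`, that move changes the squared length by `5 - 2 * (2 * s + t)`, while
the robber's step can have increased it by at most `2 * s - 1`. -/
lemma exists_knightStep_lt {p e : ℤ × ℤ} (he : e ∈ footSteps) (hp : 3 ≤ |p.1| + |p.2|) :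
    ∃ m ∈ knightSteps, dot (p + m) (p + m) < dot (p + e) (p + e) := by
  obtain ⟨x, y⟩ := p
  have hx : ∃ s : ℤ, (s = 1 ∨ s = -1) ∧ |x| = s * x ∧ 0 ≤ s * x := by
    rcases abs_cases x with h | h
    exacts [⟨1, by simp, by linarith, by linarith⟩, ⟨-1, by simp, by linarith, by linarith⟩]
  have hy : ∃ t : ℤ, (t = 1 ∨ t = -1) ∧ |y| = t * y ∧ 0 ≤ t * y := by
    rcases abs_cases y with h | h
    exacts [⟨1, by simp, by linarith, by linarith⟩, ⟨-1, by simp, by linarith, by linarith⟩]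
  obtain ⟨s, hs, hxs, hx0⟩ := hx
  obtain ⟨t, ht, hyt, hy0⟩ := hy
  simp only [hxs, hyt] at hp
  rcases le_total (s * x) (t * y) with hxy | hxy
  · refine ⟨(-s, -2 * t), ?_, ?_⟩
    · rcases hs with rfl | rfl <;> rcases ht with rfl | rfl <;> decide
    · simp only [footSteps, Finset.mem_insert, Finset.mem_singleton] at he
      rcases hs with rfl | rfl <;> rcases ht with rfl | rfl <;>
        rcases he with rfl | rfl | rfl | rfl | rfl <;> simp only [dot, Prod.mk_add_mk] <;> nlinarith
  · refine ⟨(-2 * s, -t), ?_, ?_⟩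
    · rcases hs with rfl | rfl <;> rcases ht with rfl | rfl <;> decide
    · simp only [footSteps, Finset.mem_insert, Finset.mem_singleton] at he
      rcases hs with rfl | rfl <;> rcases ht with rfl | rfl <;>
        rcases he with rfl | rfl | rfl | rfl | rfl <;> simp only [dot, Prod.mk_add_mk] <;> nlinarith

/-- A knight that is not yet close can answer any step of the robber by capturing him, or by
reducing its gap. -/
lemma exists_gap_lt {a e : ℤ × ℤ} (ha : a ∉ closeSet) (ha0 : a ≠ 0) (he : e ∈ footSteps) :
    e - a ∈ knightSteps ∨ ∃ m ∈ knightSteps, gap (a - e + m) < gap a := by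
  have hpos : 0 < dot a a := by
    obtain ⟨x, y⟩ := a
    have : x ≠ 0 ∨ y ≠ 0 := by
      by_contra! h
      exact ha0 (by simp [h.1, h.2])
    simp only [dot]
    rcases this with h | h
    · nlinarith [mul_self_pos.2 h, mul_self_nonneg y]
    · nlinarith [mul_self_pos.2 h, mul_self_nonneg x]
  have hgap : gap a = (dot a a).toNat := if_neg ha
  by_cases hp : 3 ≤ |(a - e).1| + |(a - e).2|
  · obtain ⟨m, hm, hlt⟩ := exists_knightStep_lt he hp
    rw [sub_add_cancel] at hlt
    refine .inr ⟨m, hm, ?_⟩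
    rw [hgap, gap]
    split_ifs <;> omega
  ·
    -- The remaining `13` positions: from each one the knight captures or becomes close.
    have near : ∀ x ∈ Finset.Icc (-2 : ℤ) 2, ∀ y ∈ Finset.Icc (-2 : ℤ) 2, |x| + |y| < 3 →
        -(x, y) ∈ knightSteps ∨ ∃ m ∈ knightSteps, (x, y) + m ∈ closeSet := by
      decide +kernel
    have h1 := abs_le.1 (show |(a - e).1| ≤ 2 by linarith [abs_nonneg (a - e).2])
    have h2 := abs_le.1 (show |(a - e).2| ≤ 2 by linarith [abs_nonneg (a - e).1])
    rcases near _ (Finset.mem_Icc.2 h1) _ (Finset.mem_Icc.2 h2) (not_le.1 hp) with h | ⟨m, hm, h⟩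
    · left
      rwa [Prod.mk.eta, neg_sub] at h
    · refine .inr ⟨m, hm, ?_⟩
      rw [hgap, gap, if_pos h]
      omega

lemma wins₂_all (n : ℕ) (a b : ℤ × ℤ) : Wins₂ n a b := by
  induction hN : gap a + gap b using Nat.strong_induction_on generalizing a b with
  | _ N ih =>
  subst hN
  rcases eq_or_ne a 0 with rfl | ha0
  · exact fun c r => .caught ⟨0, by simp⟩
  rcases eq_or_ne b 0 with rfl | hb0
  · exact fun c r => .caught ⟨1, by simp⟩
  -- A knight keeps its gap from growing, and reduces it unless the gap is already zero.
  have answer : ∀ d : ℤ × ℤ, d ≠ 0 → ∀ e ∈ footSteps, e - d ∈ knightSteps ∨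
      ∃ m ∈ knightSteps, gap (d - e + m) ≤ gap d ∧ (d ∉ closeSet → gap (d - e + m) < gap d) := by
    intro d hd e he
    by_cases hc : d ∈ closeSet
    · refine (mem_closeSet_keep d hc e he).imp_right ?_
      rintro ⟨m, hm, h⟩
      exact ⟨m, hm, by simp [gap, h], fun h => absurd hc h⟩
    · refine (exists_gap_lt hc hd he).imp_right ?_
      rintro ⟨m, hm, h⟩
      exact ⟨m, hm, h.le, fun _ => h⟩
  by_cases hab : a ∈ closeSet ∧ b ∈ closeSet
  · exact wins₂_of_mem_closeSet hab.1 hab.2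
  refine wins₂_step fun e he => ?_
  rcases answer a ha0 e he with h | ⟨m, hm, hle, hlt⟩
  · exact .inl h
  rcases answer b hb0 e he with h | ⟨m', hm', hle', hlt'⟩
  · exact .inr (.inl h)
  refine .inr (.inr ⟨m, hm, m', hm', ih _ ?_ _ _ rfl⟩)
  rcases not_and_or.1 hab with h | h
  · have := hlt h
    omega
  · have := hlt' h
    omega

lemma three_knights_win (n : ℕ) :
    CopsHaveWinningStrategy 3 (fun _ : Fin 3 => knightMove n) (footMove n) := by
  refine ⟨fun _ => 0, fun r => .copsTurn (fun _ => 0) (fun _ => .inl rfl) ?_⟩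
  obtain ⟨d, hd⟩ : ∃ d, r + proj n d = 0 := by
    obtain ⟨x, hx⟩ := ZMod.intCast_surjective r.1
    obtain ⟨y, hy⟩ := ZMod.intCast_surjective r.2
    exact ⟨(-x, -y), by ext <;> simp [proj_apply, hx, hy]⟩
  have h := wins₂_all n d d d r
  rw [hd] at h
  convert h using 1
  funext i
  fin_cases i <;> rfl

/-! ### Two knights do not win -/

/-- The steps `e` of the robber after which a knight at displacement `d` captures him at once. -/
def covered (n : ℕ) (d : V n) : Finset (ℤ × ℤ) :=
  footSteps.filter fun e => ∃ m ∈ knightSteps, proj n e = d + proj n m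

lemma proj_eq_iff_of_small {n : ℕ} (hn : 7 ≤ n) {u v : ℤ × ℤ} (h₁ : |u.1 - v.1| ≤ 6)
    (h₂ : |u.2 - v.2| ≤ 6) : proj n u = proj n v ↔ u = v := by
  refine ⟨fun h => ?_, fun h => h ▸ rfl⟩
  rw [proj_apply, proj_apply, Prod.mk.injEq, ZMod.intCast_eq_intCast_iff_dvd_sub,
    ZMod.intCast_eq_intCast_iff_dvd_sub] at h
  have small : ∀ x y : ℤ, |x - y| ≤ 6 → (n : ℤ) ∣ y - x → x = y := by
    intro x y hxy hd
    rw [abs_sub_comm] at hxy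
    have := Int.eq_zero_of_abs_lt_dvd hd (by omega)
    omega
  exact Prod.ext (small _ _ h₁ h.1) (small _ _ h₂ h.2)

/-- A knight not standing on the robber covers at most two of his five options. When `n ≥ 7`
the relevant displacements are too short to wrap around the torus, so the count is that of the
infinite board. -/
lemma card_covered_le {n : ℕ} (hn : 5 ≤ n) {d : V n} (hd : d ≠ 0) : (covered n d).card ≤ 2 := by
  by_cases h7 : 7 ≤ n
  · rcases (covered n d).eq_empty_or_nonempty with h | ⟨e₀, h₀⟩
    · simp [h]
    simp only [covered, Finset.mem_filter] at h₀
    obtain ⟨he₀, m₀, hm₀, h₀⟩ := h₀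
    have hdw : d = proj n (e₀ - m₀) := by rw [map_sub, h₀]; abel
    have plane : ∀ e₀ ∈ footSteps, ∀ m₀ ∈ knightSteps, e₀ - m₀ ≠ 0 →
        (footSteps.filter fun e => ∃ m ∈ knightSteps, e = e₀ - m₀ + m).card ≤ 2 := by
      decide +kernel
    have bound : ∀ e₀ ∈ footSteps, ∀ m₀ ∈ knightSteps, ∀ e ∈ footSteps, ∀ m ∈ knightSteps,
        |e.1 - (e₀ - m₀ + m).1| ≤ 6 ∧ |e.2 - (e₀ - m₀ + m).2| ≤ 6 := by
      decide +kernel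
    refine le_trans (Finset.card_le_card ?_)
      (plane e₀ he₀ m₀ hm₀ fun h => hd (by rw [hdw, h, map_zero]))
    intro e he
    simp only [covered, Finset.mem_filter] at he ⊢
    obtain ⟨he, m, hm, h⟩ := he
    have hb := bound e₀ he₀ m₀ hm₀ e he m hm
    rw [hdw, ← map_add, proj_eq_iff_of_small h7 hb.1 hb.2] at h
    exact ⟨he, m, hm, h⟩
  · obtain rfl | rfl : n = 5 ∨ n = 6 := by omega
    · revert d
      simp only [covered, proj_apply]
      decide +kernel
    · revert d
      simp only [covered, proj_apply]
      decide +kernel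

lemma exists_safe_step {n k : ℕ} (hn : 5 ≤ n) (hk : k ≤ 2) (c : Fin k → V n) (r : V n)
    (h : ∀ i, c i ≠ r) :
    ∃ r', stayOr (footMove n) r r' ∧ ∀ i, ¬ stayOr (knightMove n) (c i) r' := by
  have hcard : (Finset.univ.biUnion fun i => covered n (c i - r)).card < footSteps.card := by
    calc _ ≤ (Finset.univ : Finset (Fin k)).card * 2 :=
          Finset.card_biUnion_le_card_mul _ _ _ fun i _ =>
            card_covered_le hn (sub_ne_zero.2 (h i))
      _ ≤ 4 := by simp; omega
      _ < footSteps.card := by decide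
  obtain ⟨e, he, hne⟩ := Finset.exists_mem_notMem_of_card_lt_card hcard
  refine ⟨r + proj n e, stayOr_footMove_iff.2 ⟨e, he, rfl⟩, fun i hi => hne ?_⟩
  obtain ⟨m, hm, h⟩ := stayOr_knightMove_iff.1 hi
  refine Finset.mem_biUnion.2 ⟨i, Finset.mem_univ _, Finset.mem_filter.2 ⟨he, m, hm, ?_⟩⟩
  rw [sub_add_eq_add_sub, ← h, add_sub_cancel_left]

/-- In a position won by at most two knights, some knight already occupies the robber's vertex
or, if it is the cops' turn, attacks it. -/
lemma CopsWin.threat {n k : ℕ} (hn : 5 ≤ n) (hk : k ≤ 2) {c : Fin k → V n} {r : V n} {t : Bool}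
    (h : CopsWin (fun _ : Fin k => knightMove n) (footMove n) c r t) :
    ∃ i, c i = r ∨ (t = true ∧ stayOr (knightMove n) (c i) r) := by
  induction h with
  | caught h =>
    obtain ⟨i, hi⟩ := h
    exact ⟨i, .inl hi⟩
  | copsTurn c' h _ ih =>
    obtain ⟨i, hi | hi⟩ := ih
    · exact ⟨i, .inr ⟨rfl, hi ▸ h i⟩⟩
    · simp at hi
  | @robTurn c r _ ih =>
    by_contra! hfree
    obtain ⟨r', hr', hsafe⟩ := exists_safe_step hn hk c r fun i => (hfree i).1
    obtain ⟨i, hi | hi⟩ := ih r' hr'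
    · exact hsafe i (.inl hi.symm)
    · exact hsafe i hi.2

lemma at_most_two_knights_lose {n k : ℕ} (hn : 5 ≤ n) (hk : k ≤ 2) :
    ¬ CopsHaveWinningStrategy k (fun _ : Fin k => knightMove n) (footMove n) := by
  rintro ⟨c, hc⟩
  have : NeZero n := ⟨by omega⟩
  have hcard : (Finset.univ.image c).card < (Finset.univ : Finset (V n)).card := by
    calc _ ≤ (Finset.univ : Finset (Fin k)).card := Finset.card_image_le
      _ < 5 * 5 := by simp; omega
      _ ≤ n * n := Nat.mul_le_mul hn hn
      _ = _ := by simp [ZMod.card]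
  obtain ⟨r₀, -, hr₀⟩ := Finset.exists_mem_notMem_of_card_lt_card hcard
  obtain ⟨r, -, hsafe⟩ := exists_safe_step hn hk c r₀ fun i hi =>
    hr₀ (Finset.mem_image.2 ⟨i, Finset.mem_univ _, hi⟩)
  obtain ⟨i, hi | hi⟩ := (hc r).threat hn hk
  · exact hsafe i (.inl hi.symm)
  · exact hsafe i hi.2

/-- For `n ≥ 5`, on the `n × n` toroidal chess graph with every
cop a knight and the robber on foot, the cop number is exactly `3`: three knight
cops have a winning strategy, and two knight cops do not. -/
theorem copNumber_knights_footRobber_eq_three (n : ℕ) (hn : 5 ≤ n) :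
    copNumber n (fun _ _ => knightMove n) (footMove n) = 3 ∧
    CopsHaveWinningStrategy 3 (fun _ : Fin 3 => knightMove n) (footMove n) ∧
    ¬ CopsHaveWinningStrategy 2 (fun _ : Fin 2 => knightMove n) (footMove n) := by
  refine ⟨?_, three_knights_win n, at_most_two_knights_lose hn le_rfl⟩
  refine le_antisymm (Nat.sInf_le (three_knights_win n))
    (le_csInf ⟨3, three_knights_win n⟩ fun k hk => ?_)
  by_contra! hlt
  exact at_most_two_knights_lose hn (Nat.le_of_lt_succ hlt) hk
end
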